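/- The linear automorphism group Lin(Z¹² + F₁₂(X,Y)) ⊆ PGL(3,ℂ) of the smooth plane curve C₁₂ : Z¹² + F₁₂(X,Y) = 0 has order 720 = 60·12, and there exists a group homomorphism φ : ℤ/2 → Aut(SL(2,5)) such that this group is isomorphic to ℤ/3 × (SL(2,5) ⋊_φ ℤ/2). -/

import Mathlib

noncomputable section
open Matrix MvPolynomial

/-- The subgroup of nonzero scalar matrices in `GL(3, ℂ)`. -/
def scalarSub : Subgroup (GL (Fin 3) ℂ) :=
  (Units.map (algebraMap ℂ (Matrix (Fin 3) (Fin 3) ℂ)).toMonoidHom).range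

instance : scalarSub.Normal := by
  constructor
  rintro n ⟨c, rfl⟩ g
  refine ⟨c, ?_⟩
  ext
  simp only [Units.coe_map, RingHom.toMonoidHom_eq_coe, MonoidHom.coe_coe, Units.val_mul]
  rw [← Algebra.commutes (↑c : ℂ) (↑g : Matrix (Fin 3) (Fin 3) ℂ), mul_assoc,
    ← Units.val_mul, mul_inv_cancel, Units.val_one, mul_one]

/-- `PGL(3, ℂ)`: the quotient of `GL(3, ℂ)` by the nonzero scalar matrices. -/
abbrev PGL3 := GL (Fin 3) ℂ ⧸ scalarSub

/-- `g` maps the zero set of `F` in `ℂ³` onto itself. -/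
def Preserves (F : MvPolynomial (Fin 3) ℂ) (g : GL (Fin 3) ℂ) : Prop :=
  (fun v => (g : Matrix (Fin 3) (Fin 3) ℂ).mulVec v) '' {v : Fin 3 → ℂ | eval v F = 0}
    = {v : Fin 3 → ℂ | eval v F = 0}

/-- The subgroup of `GL(3, ℂ)` of matrices mapping the zero set of `F` onto itself. -/
def LinGL (F : MvPolynomial (Fin 3) ℂ) : Subgroup (GL (Fin 3) ℂ) where
  carrier := {g | Preserves F g}
  one_mem' := by
    show Preserves F 1
    unfold Preserves
    simp [Matrix.one_mulVec]
  mul_mem' := by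
    intro a b ha hb
    show Preserves F (a * b)
    unfold Preserves at *
    have h : (fun v => ((a * b : GL (Fin 3) ℂ) : Matrix (Fin 3) (Fin 3) ℂ).mulVec v)
        = (fun v => (a : Matrix (Fin 3) (Fin 3) ℂ).mulVec v) ∘
          (fun v => (b : Matrix (Fin 3) (Fin 3) ℂ).mulVec v) := by
      funext v
      simp [Matrix.mulVec_mulVec]
    rw [h, Set.image_comp, hb, ha]
  inv_mem' := by
    intro a ha
    show Preserves F a⁻¹
    unfold Preserves at *
    conv_lhs => rw [← ha, ← Set.image_comp]
    have h : ((fun v => ((a⁻¹ : GL (Fin 3) ℂ) : Matrix (Fin 3) (Fin 3) ℂ).mulVec v) ∘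
        (fun v => (a : Matrix (Fin 3) (Fin 3) ℂ).mulVec v)) = id := by
      funext v
      rw [Function.comp_apply, Matrix.mulVec_mulVec, ← Units.val_mul, inv_mul_cancel,
        Units.val_one, Matrix.one_mulVec, id_eq]
    rw [h, Set.image_id]

/-- The linear automorphism group `Lin(F) ⊆ PGL(3, ℂ)`:
classes of matrices mapping the zero set of `F` onto itself. -/
def Lin (F : MvPolynomial (Fin 3) ℂ) : Subgroup PGL3 :=
  (LinGL F).map (QuotientGroup.mk' scalarSub)

/-- `G = Z¹² + F₁₂(X, Y)` with `X = X 0`, `Y = X 1`, `Z = X 2`. -/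
def G12 : MvPolynomial (Fin 3) ℂ :=
  X 2 ^ 12 + X 0 * X 1 * (X 0 ^ 10 + 11 * X 0 ^ 5 * X 1 ^ 5 - X 1 ^ 10)

/-!
Write `f` for Klein's form `F₁₂`. Say that a function `G` decouples along `p` and `q` when it is a
sum of two functions along these directions, that is, when `∂_p ∂_q G = 0`. A linear symmetry of the
curve multiplies `Z¹² + f` by a constant, so it preserves decoupled pairs. Each of the directions
`X`, `Y` is decoupled from `Z`, while `f` itself has no decoupled pairs; this forces the symmetry to
be, up to a scalar, a block matrix `diag(A, 1)`, with `A` preserving `f`.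

The zeros of `f` in `ℙ¹` are the twelve vertices of an icosahedron. Over `ζ = exp (2πi/5)`, explicit
icosahedral matrices of determinant `1` act transitively on them, and the stabilizer of one vertex
consists of twelfth roots of unity times powers of the rotation `diag(ζ³, ζ²)`. After a change of
basis these matrices are integral over `ℤ[ζ]`, and reduction modulo the prime `1 - ζ` above `5`
turns the words obtained in this way into the Bruhat decomposition of `SL(2, 5)`. Hence the matrices
of determinant `1` preserving `f` form a copy of `SL(2, 5)`. The remaining scalars are generated by
the cube roots of unity, which give the factor `ℤ/3`, and by `i`; the latter times an element of
order `4` is an involution of determinant `-1`, which gives the semidirect factor `ℤ/2`.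
-/

section LineRestriction

variable {σ R : Type*} [CommSemiring R]

/-- The restriction of `f` to the parametrized line `t ↦ u + t • r`. -/
def lineRestriction (f : MvPolynomial σ R) (u r : σ → R) : Polynomial R :=
  aeval (fun i => Polynomial.C (r i) * Polynomial.X + Polynomial.C (u i)) f

theorem eval_lineRestriction (f : MvPolynomial σ R) (u r : σ → R) (t : R) :
    (lineRestriction f u r).eval t = eval (u + t • r) f := by
  induction f using MvPolynomial.induction_on with
  | C a => simp [lineRestriction]
  | add f g hf hg => simpa [lineRestriction] using congrArg₂ (· + ·) hf hg
  | mul_X f i hf =>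
    rw [lineRestriction, map_mul, Polynomial.eval_mul, ← lineRestriction, hf]
    simp [mul_comm t, add_comm]

theorem natDegree_lineRestriction_le (f : MvPolynomial σ R) (u r : σ → R) :
    (lineRestriction f u r).natDegree ≤ f.totalDegree :=
  (aeval_natDegree_le f le_rfl _ fun _ => Polynomial.natDegree_linear_le).trans_eq (mul_one _)

theorem coeff_prod_linear_pow (s : Finset σ) (m : σ → ℕ) (u r : σ → R) :
    (∏ i ∈ s, (Polynomial.C (r i) * Polynomial.X + Polynomial.C (u i)) ^ m i).coeff
      (∑ i ∈ s, m i) = ∏ i ∈ s, r i ^ m i := by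
  classical
  have hdeg (i : σ) :
      ((Polynomial.C (r i) * Polynomial.X + Polynomial.C (u i)) ^ m i).natDegree ≤ m i :=
    Polynomial.natDegree_pow_le_of_le _ Polynomial.natDegree_linear_le |>.trans_eq (mul_one _)
  have hcoeff (i : σ) :
      ((Polynomial.C (r i) * Polynomial.X + Polynomial.C (u i)) ^ m i).coeff (m i) = r i ^ m i := by
    simpa using Polynomial.coeff_pow_of_natDegree_le (m := m i)
      (Polynomial.natDegree_linear_le (a := r i) (b := u i))
  induction s using Finset.induction_on with
  | empty => simp
  | insert i s hi ih =>
    rw [Finset.prod_insert hi, Finset.prod_insert hi, Finset.sum_insert hi,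
      Polynomial.coeff_mul_add_eq_of_natDegree_le (hdeg i), hcoeff, ih]
    exact (Polynomial.natDegree_prod_le _ _).trans (Finset.sum_le_sum fun j _ => hdeg j)

theorem coeff_lineRestriction {f : MvPolynomial σ R} {d : ℕ} (hf : f.IsHomogeneous d)
    (u r : σ → R) : (lineRestriction f u r).coeff d = eval r f := by
  rw [lineRestriction, aeval_def, eval₂_eq, Polynomial.finsetSum_coeff, eval_eq]
  refine Finset.sum_congr rfl fun m hm => ?_
  rw [← Polynomial.C_eq_algebraMap, Polynomial.coeff_C_mul, hf.degree_eq_sum_deg_support hm,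
    coeff_prod_linear_pow]

theorem eq_C_mul_X_pow_sub_C_of_forall_eval_eq_zero {K : Type*} [Field K] [IsAlgClosed K]
    [CharZero K] {a : K} (ha : a ≠ 0) {d : ℕ} (hd : d ≠ 0) {Q : Polynomial K}
    (hQ : Q.natDegree ≤ d) (h0 : ∀ z, z ^ d = a → Q.eval z = 0) :
    Q = Polynomial.C (Q.coeff d) * (Polynomial.X ^ d - Polynomial.C a) := by
  set P : Polynomial K := Polynomial.X ^ d - Polynomial.C a with hP
  have hPm : P.Monic := Polynomial.monic_X_pow_sub_C a hd
  have hPQ : P ∣ Q := by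
    rcases eq_or_ne Q 0 with rfl | hQ0
    · exact dvd_zero P
    have hnodup : P.roots.Nodup :=
      Polynomial.nodup_roots (Polynomial.separable_X_pow_sub_C a (Nat.cast_ne_zero.2 hd) ha)
    refine (IsAlgClosed.dvd_iff_roots_le_roots hPm.ne_zero hQ0).2
      ((Multiset.le_iff_subset hnodup).2 fun z hz => ?_)
    have hz : z ^ d = a := by
      simpa [hP, sub_eq_zero] using (Polynomial.mem_roots'.1 hz).2
    exact (Polynomial.mem_roots hQ0).2 (h0 z hz)
  obtain ⟨c, rfl⟩ := hPQ
  rcases eq_or_ne c 0 with rfl | hc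
  · simp
  have hPd : P.natDegree = d := Polynomial.natDegree_X_pow_sub_C
  have hc0 : c.natDegree = 0 := by
    rw [hPm.natDegree_mul' hc, hPd] at hQ
    lia
  obtain ⟨b, rfl⟩ := Polynomial.natDegree_eq_zero.1 hc0
  have hcoeff : (P * Polynomial.C b).coeff d = b := by
    rw [Polynomial.coeff_mul_C, ← hPd, hPm.coeff_natDegree, one_mul]
  rw [hcoeff, mul_comm]

end LineRestriction

section CyclicForm

variable {n : ℕ}

/-- The form `Z ^ d + f`, in which `f` does not involve the last variable `Z`; it defines the
cyclic cover of degree `d` of projective space branched along `f = 0`. -/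
def cyclicForm {R : Type*} [CommSemiring R] (d : ℕ) (f : MvPolynomial (Fin n) R) :
    MvPolynomial (Fin (n + 1)) R :=
  X (Fin.last n) ^ d + rename Fin.castSucc f

theorem eval_cyclicForm {R : Type*} [CommSemiring R] (d : ℕ) (f : MvPolynomial (Fin n) R)
    (v : Fin (n + 1) → R) :
    eval v (cyclicForm d f) = v (Fin.last n) ^ d + eval (Fin.init v) f := by
  simp only [cyclicForm, map_add, map_pow, eval_X, eval_rename]
  rfl

theorem isHomogeneous_cyclicForm {R : Type*} [CommSemiring R] {d : ℕ} {f : MvPolynomial (Fin n) R}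
    (hf : f.IsHomogeneous d) : (cyclicForm d f).IsHomogeneous d :=
  (isHomogeneous_X_pow _ d).add hf.rename_isHomogeneous

theorem init_single_last {R : Type*} [Zero R] (z : R) :
    Fin.init (Pi.single (Fin.last n) z : Fin (n + 1) → R) = 0 := by
  funext i
  simp [Fin.init, Fin.castSucc_ne_last]

theorem init_add_smul_single_last {R : Type*} [Semiring R] (v : Fin (n + 1) → R) (t : R) :
    Fin.init (v + t • Pi.single (Fin.last n) 1) = Fin.init v := by
  funext i
  simp [Fin.init, Fin.castSucc_ne_last]

variable {K : Type*} [Field K] [IsAlgClosed K] [CharZero K]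

theorem eq_C_mul_cyclicForm_of_forall_eval_eq_zero {d : ℕ} (hd : d ≠ 0)
    {f : MvPolynomial (Fin n) K} (hf : f ≠ 0) {G : MvPolynomial (Fin (n + 1)) K}
    (hG : G.IsHomogeneous d) (h0 : ∀ v, eval v (cyclicForm d f) = 0 → eval v G = 0) :
    G = C (eval (Pi.single (Fin.last n) 1) G) * cyclicForm d f := by
  set e : Fin (n + 1) → K := Pi.single (Fin.last n) 1 with he
  have hgeneric (v : Fin (n + 1) → K) (hv : eval (Fin.init v) f ≠ 0) :
      eval v G = eval e G * eval v (cyclicForm d f) := by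
    set w := v + (-v (Fin.last n)) • e with hw
    have hwv : w + v (Fin.last n) • e = v := by rw [hw, neg_smul, neg_add_cancel_right]
    have hwe (z : K) : eval (w + z • e) (cyclicForm d f) = z ^ d + eval (Fin.init v) f := by
      rw [eval_cyclicForm, init_add_smul_single_last, init_add_smul_single_last]
      simp [he, hw]
    have hline := congrArg (Polynomial.eval (v (Fin.last n)))
      (eq_C_mul_X_pow_sub_C_of_forall_eval_eq_zero (neg_ne_zero.2 hv) hd
        ((natDegree_lineRestriction_le G w e).trans hG.totalDegree_le) fun z hz => by
          rw [eval_lineRestriction, h0 _ (by rw [hwe, hz, neg_add_cancel])])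
    rw [eval_lineRestriction, coeff_lineRestriction hG, hwv] at hline
    have hv' := hwe (v (Fin.last n))
    rw [hwv] at hv'
    rw [hline, hv']
    simp
  have hprod : rename Fin.castSucc f * (G - C (eval e G) * cyclicForm d f) = 0 := by
    refine MvPolynomial.funext fun v => ?_
    rw [map_mul, eval_rename, map_zero, mul_eq_zero, or_iff_not_imp_left, map_sub, map_mul, eval_C,
      sub_eq_zero]
    exact hgeneric v
  have hf' : rename Fin.castSucc f ≠ 0 :=
    (map_ne_zero_iff _ (rename_injective _ (Fin.castSucc_injective n))).2 hf
  exact sub_eq_zero.1 ((mul_eq_zero.1 hprod).resolve_left hf')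

theorem eval_mulVec_cyclicForm {d : ℕ} (hd : d ≠ 0) {f : MvPolynomial (Fin n) K} (hf : f ≠ 0)
    (hfd : f.IsHomogeneous d) {M : Matrix (Fin (n + 1)) (Fin (n + 1)) K}
    (hM : ∀ v, eval v (cyclicForm d f) = 0 → eval (M *ᵥ v) (cyclicForm d f) = 0)
    (v : Fin (n + 1) → K) :
    eval (M *ᵥ v) (cyclicForm d f) =
      eval (M *ᵥ Pi.single (Fin.last n) 1) (cyclicForm d f) * eval v (cyclicForm d f) := by
  set G := bind₁ M.toMvPolynomial (cyclicForm d f) with hG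
  have hGd : G.IsHomogeneous d := by
    simpa using (isHomogeneous_cyclicForm hfd).aeval _ M.toMvPolynomial_isHomogeneous
  have heval (u : Fin (n + 1) → K) : eval u G = eval (M *ᵥ u) (cyclicForm d f) := by
    rw [hG, eval, eval₂Hom_bind₁]
    congr 2
    exact _root_.funext fun i => M.toMvPolynomial_eval_eq_apply i u
  have := congrArg (eval v) (eq_C_mul_cyclicForm_of_forall_eval_eq_zero hd hf hGd
    fun u hu => (heval u).trans (hM u hu))
  rwa [map_mul, eval_C, heval, heval] at this

end CyclicForm

section DecoupledDirections

/-- The function `G` splits as a sum along `p` and `q`. This is the finite-difference form of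
`∂_p ∂_q G = 0`, a condition on a pair of directions that linear symmetries of `G` preserve. -/
def DecoupledAlong {V K : Type*} [Add V] [Add K] (G : V → K) (p q : V) : Prop :=
  ∀ v, G (v + p + q) + G v = G (v + p) + G (v + q)

namespace DecoupledAlong

theorem map {V W K : Type*} [AddZeroClass V] [AddZeroClass W] [NonUnitalNonAssocSemiring K]
    {G : V → K} {H : W → K} {p q : V} (h : DecoupledAlong G p q) {e : V →+ W}
    (he : Function.Surjective e) {c : K} (hGH : ∀ v, H (e v) = c * G v) :
    DecoupledAlong H (e p) (e q) := fun w => by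
  obtain ⟨v, rfl⟩ := he w
  simp only [← map_add, hGH, ← mul_add, h v]

variable {n d : ℕ} {K : Type*} [Field K] {f : MvPolynomial (Fin n) K} {p q : Fin (n + 1) → K}

theorem cyclicForm_of_last_eq_zero (hp : p (Fin.last n) = 0) (hq : Fin.init q = 0) :
    DecoupledAlong (fun v => eval v (cyclicForm d f)) p q := fun v => by
  have hinit (u : Fin (n + 1) → K) : Fin.init (u + q) = Fin.init u := by
    funext i
    simpa [Fin.init] using congrFun hq i
  simp only [eval_cyclicForm, hinit, Pi.add_apply, hp, add_zero]
  ring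

variable [CharZero K]

theorem last_mul_last_eq_zero (h : DecoupledAlong (fun v => eval v (cyclicForm d f)) p q)
    (hd : 3 ≤ d) : p (Fin.last n) * q (Fin.last n) = 0 := by
  obtain ⟨m, rfl⟩ := Nat.exists_eq_add_of_le' hd
  set a := p (Fin.last n)
  set b := q (Fin.last n)
  let k : K := eval (Fin.init (p + q)) f + eval 0 f - eval (Fin.init p) f - eval (Fin.init q) f
  have hpoly : ((Polynomial.X + Polynomial.C (a + b)) ^ (m + 3) + Polynomial.X ^ (m + 3) +
      Polynomial.C k : Polynomial K) =
      (Polynomial.X + Polynomial.C a) ^ (m + 3) + (Polynomial.X + Polynomial.C b) ^ (m + 3) := by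
    refine Polynomial.funext fun z => ?_
    have hinit (u : Fin (n + 1) → K) :
        Fin.init (Fin.snoc 0 z + u : Fin (n + 1) → K) = Fin.init u := by
      funext i
      simp [Fin.init]
    have h0 : Fin.init (Fin.snoc 0 z : Fin (n + 1) → K) = 0 := Fin.init_snoc ..
    have hz := h (Fin.snoc 0 z)
    simp only [eval_cyclicForm, add_assoc, hinit, h0, Pi.add_apply, Fin.snoc_last] at hz
    simp only [Polynomial.eval_add, Polynomial.eval_pow, Polynomial.eval_X, Polynomial.eval_C, k]
    linear_combination hz
  have hcoeff := congrArg (Polynomial.coeff · (m + 1)) hpoly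
  have h2 : m + 3 - (m + 1) = 2 := by lia
  simp only [Polynomial.coeff_add, Polynomial.coeff_X_add_C_pow, Polynomial.coeff_X_pow,
    Polynomial.coeff_C, h2, show m + 1 ≠ m + 3 by lia, Nat.add_one_ne_zero, if_false] at hcoeff
  have hchoose : ((m + 3).choose (m + 1) : K) ≠ 0 :=
    Nat.cast_ne_zero.2 (Nat.choose_pos (by lia)).ne'
  have h2ab : ((m + 3).choose (m + 1) : K) * 2 * (a * b) = 0 := by linear_combination hcoeff
  exact (mul_eq_zero.1 h2ab).resolve_left (mul_ne_zero hchoose two_ne_zero)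

theorem init (h : DecoupledAlong (fun v => eval v (cyclicForm d f)) p q) (hd : 3 ≤ d) :
    DecoupledAlong (fun x => eval x f) (Fin.init p) (Fin.init q) := fun x => by
  have hinit (u : Fin (n + 1) → K) (y : Fin n → K) (z : K) :
      (Fin.snoc y z + u : Fin (n + 1) → K) = Fin.snoc (y + Fin.init u) (z + u (Fin.last n)) := by
    funext i
    refine Fin.lastCases ?_ (fun j => ?_) i <;> simp [Fin.init]
  have hx := h (Fin.snoc x 0)
  simp only [eval_cyclicForm, hinit, Fin.init_snoc, Fin.snoc_last] at hx
  have hd0 : d ≠ 0 := by lia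
  rcases mul_eq_zero.1 (h.last_mul_last_eq_zero hd) with h0 | h0 <;>
    simp only [h0, zero_add, add_zero, zero_pow hd0] at hx <;> linear_combination hx

end DecoupledAlong

/-- A polynomial which decouples along no pair of nonzero directions. For a form this says that
no second derivative `∂_p ∂_q f` with `p, q ≠ 0` vanishes. -/
def IsTotallyCoupled {σ R : Type*} [CommSemiring R] (f : MvPolynomial σ R) : Prop :=
  ∀ p q, DecoupledAlong (fun v => eval v f) p q → p = 0 ∨ q = 0

theorem IsTotallyCoupled.ne_zero {σ R : Type*} [CommSemiring R] [Nontrivial R] [Nonempty σ]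
    {f : MvPolynomial σ R} (hf : IsTotallyCoupled f) : f ≠ 0 := by
  rintro rfl
  have h := hf 1 1 fun v => by simp
  simp at h

end DecoupledDirections

section FormStabilizer

variable {σ R : Type*} [CommRing R]

theorem eval_smul_of_isHomogeneous {f : MvPolynomial σ R} {d : ℕ} (hf : f.IsHomogeneous d)
    (c : R) (v : σ → R) : eval (c • v) f = c ^ d * eval v f := by
  simp only [eval_eq, Pi.smul_apply, smul_eq_mul, mul_pow, Finset.prod_mul_distrib, Finset.mul_sum]
  refine Finset.sum_congr rfl fun m hm => ?_
  rw [hf.degree_eq_sum_deg_support hm, Finset.prod_pow_eq_pow_sum]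
  ring

variable [Fintype σ] [DecidableEq σ]

/-- The group of invertible matrices `A` with `f ∘ A = f`. -/
def formStabilizer (f : MvPolynomial σ R) : Subgroup (GL σ R) where
  carrier := {A | ∀ v, eval (A.1 *ᵥ v) f = eval v f}
  one_mem' v := by simp
  mul_mem' {A B} hA hB v := by
    rw [Units.val_mul, ← mulVec_mulVec, hA, hB]
  inv_mem' {A} hA v := by
    rw [← hA, mulVec_mulVec, ← Units.val_mul, mul_inv_cancel, Units.val_one, one_mulVec]

theorem scalar_mem_formStabilizer {f : MvPolynomial σ R} {d : ℕ} (hf : f.IsHomogeneous d)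
    {c : Rˣ} (hc : c ^ d = 1) : GeneralLinearGroup.scalar σ c ∈ formStabilizer f := fun v => by
  rw [GeneralLinearGroup.coe_scalar, scalar_apply, ← smul_one_eq_diagonal, smul_mulVec, one_mulVec,
    eval_smul_of_isHomogeneous hf, ← Units.val_pow_eq_pow_val, hc, Units.val_one, one_mul]

end FormStabilizer

section LinOfCyclicForm

theorem mem_scalarSub {g : GL (Fin 3) ℂ} :
    g ∈ scalarSub ↔ ∃ c, GeneralLinearGroup.scalar (Fin 3) c = g := Iff.rfl

theorem preserves_of_mem_formStabilizer {F : MvPolynomial (Fin 3) ℂ} {g : GL (Fin 3) ℂ}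
    (hg : g ∈ formStabilizer F) : Preserves F g := by
  refine Set.Subset.antisymm ?_ fun v hv => ⟨g⁻¹.1 *ᵥ v, ?_, ?_⟩
  · rintro _ ⟨v, hv, rfl⟩
    exact (hg v).trans hv
  · exact (inv_mem hg v).trans hv
  · change g.1 *ᵥ (g⁻¹.1 *ᵥ v) = v
    rw [mulVec_mulVec, ← Units.val_mul, mul_inv_cancel, Units.val_one, one_mulVec]

theorem Preserves.eval_mulVec_eq_zero {F : MvPolynomial (Fin 3) ℂ} {g : GL (Fin 3) ℂ}
    (hg : Preserves F g) {v : Fin 3 → ℂ} (hv : eval v F = 0) : eval (g.1 *ᵥ v) F = 0 :=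
  hg.subset ⟨v, hv, rfl⟩

/-- The embedding of `GL(2)` into `GL(3)` as the group of block matrices `diag(A, 1)`. -/
def blockEmbedding (R : Type*) [CommRing R] : GL (Fin 2) R →* GL (Fin 3) R :=
  Units.map
    { toFun := fun A => !![A 0 0, A 0 1, 0; A 1 0, A 1 1, 0; 0, 0, 1]
      map_one' := by simp [← Matrix.ext_iff, Fin.forall_fin_succ]
      map_mul' := fun A B => by simp [mul_apply] }

theorem coe_blockEmbedding {R : Type*} [CommRing R] (A : GL (Fin 2) R) :
    (blockEmbedding R A).1 = !![A.1 0 0, A.1 0 1, 0; A.1 1 0, A.1 1 1, 0; 0, 0, 1] := rfl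

theorem blockEmbedding_injective (R : Type*) [CommRing R] :
    Function.Injective (blockEmbedding R) := fun A B h => by
  have hentry (i j : Fin 3) : (blockEmbedding R A).1 i j = (blockEmbedding R B).1 i j := by rw [h]
  ext i j
  fin_cases i <;> fin_cases j
  exacts [hentry 0 0, hentry 0 1, hentry 1 0, hentry 1 1]

theorem blockEmbedding_mulVec {R : Type*} [CommRing R] (A : GL (Fin 2) R) (v : Fin 3 → R) :
    (blockEmbedding R A).1 *ᵥ v = Fin.snoc (A.1 *ᵥ Fin.init v) (v (Fin.last 2)) := by
  funext i
  fin_cases i <;>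
    simp [coe_blockEmbedding, Fin.init, Fin.snoc, mulVec, dotProduct, Fin.sum_univ_three]

theorem eval_blockEmbedding_mulVec {R : Type*} [CommRing R] {d : ℕ} {f : MvPolynomial (Fin 2) R}
    {A : GL (Fin 2) R} (v : Fin 3 → R) :
    eval ((blockEmbedding R A).1 *ᵥ v) (cyclicForm d f) =
      v (Fin.last 2) ^ d + eval (A.1 *ᵥ Fin.init v) f := by
  rw [blockEmbedding_mulVec, eval_cyclicForm, Fin.snoc_last, Fin.init_snoc]

theorem blockEmbedding_mem_formStabilizer_iff {R : Type*} [CommRing R] {d : ℕ}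
    {f : MvPolynomial (Fin 2) R} {A : GL (Fin 2) R} :
    blockEmbedding R A ∈ formStabilizer (cyclicForm d f) ↔ A ∈ formStabilizer f := by
  refine ⟨fun h v => ?_, fun h v => ?_⟩
  · have hv := h (Fin.snoc v 0)
    rwa [eval_blockEmbedding_mulVec, eval_cyclicForm, Fin.init_snoc, add_right_inj] at hv
  · rw [eval_blockEmbedding_mulVec, eval_cyclicForm, h]

theorem exists_eq_scalar_mul_blockEmbedding {K : Type*} [Field K] {g : GL (Fin 3) K}
    (h02 : g.1 0 2 = 0) (h12 : g.1 1 2 = 0) (h20 : g.1 2 0 = 0) (h21 : g.1 2 1 = 0) :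
    ∃ c A, g = GeneralLinearGroup.scalar (Fin 3) c * blockEmbedding K A := by
  have hdet : g.1 2 2 * (g.1 0 0 * g.1 1 1 - g.1 0 1 * g.1 1 0) ≠ 0 := by
    have := g.det.ne_zero
    rw [GeneralLinearGroup.val_det_apply, det_fin_three, h02, h12, h20, h21] at this
    convert this using 1
    ring
  obtain ⟨h22, hB⟩ := mul_ne_zero_iff.1 hdet
  let B : GL (Fin 2) K := GeneralLinearGroup.mkOfDetNeZero
    !![g.1 0 0, g.1 0 1; g.1 1 0, g.1 1 1] (by rwa [det_fin_two_of])
  let c : Kˣ := Units.mk0 (g.1 2 2) h22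
  refine ⟨c, GeneralLinearGroup.scalar (Fin 2) c⁻¹ * B, Units.ext ?_⟩
  simp [-map_inv, ← Matrix.ext_iff, Fin.forall_fin_succ, coe_blockEmbedding,
    GeneralLinearGroup.coe_scalar, B, c, h02, h12, h20, h21, h22,
    GeneralLinearGroup.mkOfDetNeZero]

variable {d : ℕ} {f : MvPolynomial (Fin 2) ℂ}

theorem eval_mulVec_cyclicForm_of_mem_LinGL (hd : d ≠ 0) (hf : f ≠ 0) (hfd : f.IsHomogeneous d)
    {g : GL (Fin 3) ℂ} (hg : g ∈ LinGL (cyclicForm d f)) (v : Fin 3 → ℂ) :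
    eval (g.1 *ᵥ v) (cyclicForm d f) =
      eval (g.1 *ᵥ Pi.single (Fin.last 2) 1) (cyclicForm d f) * eval v (cyclicForm d f) :=
  eval_mulVec_cyclicForm hd hf hfd (fun _ => Preserves.eval_mulVec_eq_zero hg) v

theorem DecoupledAlong.mulVec_of_mem_LinGL (hd : d ≠ 0) (hf : f ≠ 0) (hfd : f.IsHomogeneous d)
    {g : GL (Fin 3) ℂ} (hg : g ∈ LinGL (cyclicForm d f)) {p q : Fin 3 → ℂ}
    (h : DecoupledAlong (fun v => eval v (cyclicForm d f)) p q) :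
    DecoupledAlong (fun v => eval v (cyclicForm d f)) (g.1 *ᵥ p) (g.1 *ᵥ q) :=
  h.map (e := g.1.mulVecLin.toAddMonoidHom) (mulVec_surjective_iff_isUnit.2 g.isUnit)
    (eval_mulVec_cyclicForm_of_mem_LinGL hd hf hfd hg)

theorem block_of_mem_LinGL (hd : 3 ≤ d) (hf : IsTotallyCoupled f) (hfd : f.IsHomogeneous d)
    {g : GL (Fin 3) ℂ} (hg : g ∈ LinGL (cyclicForm d f)) :
    ∃ c A, g = GeneralLinearGroup.scalar (Fin 3) c * blockEmbedding ℂ A := by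
  have hcol (j : Fin 2) : DecoupledAlong (fun v => eval v (cyclicForm d f))
      (g.1.col j.castSucc) (g.1.col (Fin.last 2)) := by
    rw [← mulVec_single_one, ← mulVec_single_one]
    refine .mulVec_of_mem_LinGL (by lia) hf.ne_zero hfd hg (.cyclicForm_of_last_eq_zero ?_ ?_)
    · exact Pi.single_eq_of_ne (Fin.castSucc_ne_last j).symm 1
    · exact init_single_last 1
  have hdet := g.det.ne_zero
  rw [GeneralLinearGroup.val_det_apply, det_fin_three] at hdet
  have hlast : Fin.init (g.1.col (Fin.last 2)) = 0 := by
    by_contra hne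
    have h (j : Fin 2) (i : Fin 2) : g.1 i.castSucc j.castSucc = 0 :=
      congrFun ((hf _ _ ((hcol j).init hd)).resolve_right hne) i
    have h00 : g.1 0 0 = 0 := h 0 0
    have h10 : g.1 1 0 = 0 := h 0 1
    have h01 : g.1 0 1 = 0 := h 1 0
    have h11 : g.1 1 1 = 0 := h 1 1
    simp [h00, h10, h01, h11] at hdet
  have h02 : g.1 0 2 = 0 := congrFun hlast 0
  have h12 : g.1 1 2 = 0 := congrFun hlast 1
  have h22 : g.1 2 2 ≠ 0 := by
    rintro h22
    simp [h02, h12, h22] at hdet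
  have hrow (j : Fin 2) : g.1 2 j.castSucc = 0 :=
    (mul_eq_zero.1 ((hcol j).last_mul_last_eq_zero hd)).resolve_right h22
  exact exists_eq_scalar_mul_blockEmbedding h02 h12 (hrow 0) (hrow 1)

/-- The map sending `A ∈ GL(2, ℂ)` to the class of `diag(A, 1)` in `PGL(3, ℂ)`. -/
def projBlockEmbedding : GL (Fin 2) ℂ →* PGL3 :=
  (QuotientGroup.mk' scalarSub).comp (blockEmbedding ℂ)

theorem projBlockEmbedding_injective : Function.Injective projBlockEmbedding := by
  refine (injective_iff_map_eq_one _).2 fun A hA => ?_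
  obtain ⟨c, hc⟩ := mem_scalarSub.1 ((QuotientGroup.eq_one_iff _).1 hA)
  have h22 : (GeneralLinearGroup.scalar (Fin 3) c).1 2 2 = (blockEmbedding ℂ A).1 2 2 := by rw [hc]
  have hc1 : c = 1 := by simpa [coe_blockEmbedding] using h22
  refine blockEmbedding_injective ℂ ?_
  rw [← hc, hc1, map_one, map_one]

theorem map_formStabilizer_eq_Lin (hd : 3 ≤ d) (hf : IsTotallyCoupled f)
    (hfd : f.IsHomogeneous d) :
    (formStabilizer f).map projBlockEmbedding = Lin (cyclicForm d f) := by
  refine le_antisymm ?_ ?_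
  · rintro _ ⟨A, hA, rfl⟩
    exact ⟨_, preserves_of_mem_formStabilizer (blockEmbedding_mem_formStabilizer_iff.2 hA), rfl⟩
  · rintro _ ⟨g, hg, rfl⟩
    obtain ⟨c, A, rfl⟩ := block_of_mem_LinGL hd hf hfd hg
    have hscal (v : Fin 3 → ℂ) :
        eval ((GeneralLinearGroup.scalar (Fin 3) c * blockEmbedding ℂ A).1 *ᵥ v) (cyclicForm d f) =
          c.1 ^ d * eval ((blockEmbedding ℂ A).1 *ᵥ v) (cyclicForm d f) := by
      rw [Units.val_mul, GeneralLinearGroup.coe_scalar, ← mulVec_mulVec, scalar_apply,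
        ← smul_one_eq_diagonal, smul_mulVec, one_mulVec,
        eval_smul_of_isHomogeneous (isHomogeneous_cyclicForm hfd)]
    have hlast :
        eval ((blockEmbedding ℂ A).1 *ᵥ Pi.single (Fin.last 2) 1) (cyclicForm d f) = 1 := by
      have hf0 : eval 0 f = 0 := by
        simpa [show d ≠ 0 by lia] using eval_smul_of_isHomogeneous hfd 0 0
      rw [eval_blockEmbedding_mulVec, init_single_last, mulVec_zero, hf0, Pi.single_eq_same,
        one_pow, add_zero]
    refine ⟨A, (blockEmbedding_mem_formStabilizer_iff (d := d)).1 fun v => ?_, ?_⟩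
    · have h := eval_mulVec_cyclicForm_of_mem_LinGL (by lia) hf.ne_zero hfd hg v
      rw [hscal, hscal, hlast, mul_one] at h
      exact mul_left_cancel₀ (pow_ne_zero d c.ne_zero) h
    · have hc : QuotientGroup.mk' scalarSub (GeneralLinearGroup.scalar (Fin 3) c) = 1 :=
        (QuotientGroup.eq_one_iff _).2 (mem_scalarSub.2 ⟨c, rfl⟩)
      rw [map_mul, hc, one_mul]
      rfl

/-- The linear automorphism group of the cyclic cover `Z ^ d + f = 0` is the group of matrices
fixing `f`. -/
def formStabilizerEquivLin (hd : 3 ≤ d) (hf : IsTotallyCoupled f) (hfd : f.IsHomogeneous d) :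
    formStabilizer f ≃* Lin (cyclicForm d f) :=
  ((formStabilizer f).equivMapOfInjective _ projBlockEmbedding_injective).trans
    (MulEquiv.subgroupCongr (map_formStabilizer_eq_Lin hd hf hfd))

end LinOfCyclicForm

section KleinForm

/-- Klein's icosahedral form `F₁₂`, whose zeros in `ℙ¹` are the vertices of a regular
icosahedron. -/
def kleinForm (R : Type*) [CommRing R] : MvPolynomial (Fin 2) R :=
  X 0 * X 1 * (X 0 ^ 10 + 11 * X 0 ^ 5 * X 1 ^ 5 - X 1 ^ 10)

theorem cyclicForm_kleinForm : cyclicForm 12 (kleinForm ℂ) = G12 := by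
  have h11 : rename Fin.castSucc (11 : MvPolynomial (Fin 2) ℂ) = 11 := map_ofNat _ 11
  simp [cyclicForm, kleinForm, G12, Fin.last, h11]

theorem eval_kleinForm {R : Type*} [CommRing R] (v : Fin 2 → R) :
    eval v (kleinForm R) = v 0 * v 1 * (v 0 ^ 10 + 11 * v 0 ^ 5 * v 1 ^ 5 - v 1 ^ 10) := by
  simp [kleinForm]

theorem isHomogeneous_kleinForm (R : Type*) [CommRing R] : (kleinForm R).IsHomogeneous 12 := by
  have hX (i : Fin 2) (m : ℕ) := isHomogeneous_X_pow (R := R) i m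
  have h11 := isHomogeneous_C (Fin 2) (11 : R)
  exact ((isHomogeneous_X R 0).mul (isHomogeneous_X R 1)).mul
    (((hX 0 10).add ((h11.mul (hX 0 5)).mul (hX 1 5))).sub (hX 1 10))

theorem eval_kleinForm_rotate {R : Type*} [CommRing R] (v : Fin 2 → R) :
    eval (!![0, 1; -1, 0] *ᵥ v) (kleinForm R) = eval v (kleinForm R) := by
  simp only [eval_kleinForm, mulVec_fin_two, of_apply, cons_val]
  ring

theorem eval_kleinForm_golden {R : Type*} [CommRing R] {τ : R} (hτ : τ ^ 2 = 1 - τ)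
    (v : Fin 2 → R) :
    eval (!![τ, 1; 1, -τ] *ᵥ v) (kleinForm R) = (1 + τ ^ 2) ^ 6 * eval v (kleinForm R) := by
  simp only [eval_kleinForm, mulVec_fin_two, of_apply, cons_val]
  grind

theorem eq_pow_of_eval_kleinForm_eq_zero {K : Type*} [Field K] {τ : K} (hτ : τ ^ 2 = 1 - τ)
    {v : Fin 2 → K} (hv : eval v (kleinForm K) = 0) :
    v 0 = 0 ∨ v 1 = 0 ∨ v 0 ^ 5 = (τ * v 1) ^ 5 ∨ (τ * v 0) ^ 5 = (-v 1) ^ 5 := by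
  have hfactor : v 0 * (v 1 * ((v 0 ^ 5 - (τ * v 1) ^ 5) * ((τ * v 0) ^ 5 - (-v 1) ^ 5))) = 0 := by
    rw [eval_kleinForm] at hv
    grind
  simpa only [mul_eq_zero, sub_eq_zero] using hfactor

variable {K : Type*} [Field K]

/-- The polynomial `F₁₂(X + s, y)` in the one variable `X`. -/
def kleinTranslate (s y : K) : Polynomial K :=
  Polynomial.C y * (Polynomial.X + Polynomial.C s) ^ 11 +
    Polynomial.C (11 * y ^ 6) * (Polynomial.X + Polynomial.C s) ^ 6 -
    Polynomial.C (y ^ 11) * (Polynomial.X + Polynomial.C s) ^ 1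

theorem eval_kleinTranslate (s y x : K) :
    (kleinTranslate s y).eval x = eval ![x + s, y] (kleinForm K) := by
  simp only [kleinTranslate, eval_kleinForm, Polynomial.eval_add, Polynomial.eval_sub,
    Polynomial.eval_mul, Polynomial.eval_pow, Polynomial.eval_X, Polynomial.eval_C, cons_val_zero,
    cons_val_one]
  ring

theorem coeff_kleinTranslate (s y : K) (k : ℕ) : (kleinTranslate s y).coeff k =
    y * (s ^ (11 - k) * Nat.choose 11 k) + 11 * y ^ 6 * (s ^ (6 - k) * Nat.choose 6 k) -
      y ^ 11 * (s ^ (1 - k) * Nat.choose 1 k) := by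
  simp only [kleinTranslate, Polynomial.coeff_add, Polynomial.coeff_sub, Polynomial.coeff_C_mul,
    Polynomial.coeff_X_add_C_pow]

variable [CharZero K]

theorem DecoupledAlong.kleinForm_coeff {p q : Fin 2 → K}
    (h : DecoupledAlong (fun v => eval v (kleinForm K)) p q) :
    p 0 * q 1 + q 0 * p 1 = 0 ∧ p 0 * q 0 = 0 := by
  have hpoly (y : K) : kleinTranslate (p 0 + q 0) (y + p 1 + q 1) + kleinTranslate 0 y =
      kleinTranslate (p 0) (y + p 1) + kleinTranslate (q 0) (y + q 1) := by
    refine Polynomial.funext fun x => ?_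
    have hx := h ![x, y]
    simp only [eval_kleinForm, Pi.add_apply, cons_val_zero, cons_val_one] at hx
    simp only [Polynomial.eval_add, eval_kleinTranslate, eval_kleinForm, cons_val_zero,
      cons_val_one, add_zero, ← add_assoc]
    exact hx
  have h10 := congrArg (Polynomial.coeff · 10) (hpoly 0)
  have h9 (y : K) := congrArg (Polynomial.coeff · 9) (hpoly y)
  simp only [Polynomial.coeff_add, coeff_kleinTranslate] at h10 h9
  norm_num [Nat.choose] at h10 h9
  constructor
  · linear_combination h10 / 11
  · linear_combination (h9 1 - h9 0) / 110

theorem isTotallyCoupled_kleinForm : IsTotallyCoupled (kleinForm K) := fun p q h => by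
  obtain ⟨hmixed, h0⟩ := h.kleinForm_coeff
  have hrot := h.map (e := (!![0, 1; -1, 0] : Matrix (Fin 2) (Fin 2) K).mulVecLin.toAddMonoidHom)
    (H := fun v => eval v (kleinForm K)) (c := 1)
    (mulVec_surjective_iff_isUnit.2 <| (isUnit_iff_isUnit_det _).2 <| by simp)
    (fun v => (eval_kleinForm_rotate v).trans (one_mul _).symm)
  have h1 : p 1 * q 1 = 0 := by
    simpa [mulVec_fin_two, vecHead, vecTail] using hrot.kleinForm_coeff.2
  simp only [_root_.funext_iff, Fin.forall_fin_two, Pi.zero_apply]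
  grind

theorem kleinTranslate_eq_of_forall_eval_kleinForm_eq {a b e : K} (ha : a ≠ 0)
    (h : ∀ x y, eval ![a * x + b * y, e * y] (kleinForm K) = eval ![x, y] (kleinForm K)) :
    kleinTranslate b e = Polynomial.C (a ^ 11)⁻¹ * Polynomial.X ^ 11 +
      Polynomial.C (11 * (a ^ 6)⁻¹) * Polynomial.X ^ 6 - Polynomial.C a⁻¹ * Polynomial.X := by
  refine Polynomial.funext fun x => ?_
  have hx := h (a⁻¹ * x) 1
  rw [mul_inv_cancel_left₀ ha, mul_one, mul_one, ← eval_kleinTranslate] at hx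
  rw [hx]
  simp only [eval_kleinForm, cons_val_zero, cons_val_one, Polynomial.eval_add, Polynomial.eval_sub,
    Polynomial.eval_mul, Polynomial.eval_pow, Polynomial.eval_X, Polynomial.eval_C]
  ring

theorem eq_zero_of_forall_eval_kleinForm_eq {a b e : K} (ha : a ≠ 0) (he : e ≠ 0)
    (h : ∀ x y, eval ![a * x + b * y, e * y] (kleinForm K) = eval ![x, y] (kleinForm K)) :
    b = 0 ∧ a ^ 11 * e = 1 ∧ a ^ 5 = e ^ 5 := by
  have hcoeff (k : ℕ) := congrArg (Polynomial.coeff · k)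
    (kleinTranslate_eq_of_forall_eval_kleinForm_eq ha h)
  simp only [coeff_kleinTranslate, Polynomial.coeff_add, Polynomial.coeff_sub,
    Polynomial.coeff_C_mul, Polynomial.coeff_X_pow, Polynomial.coeff_X] at hcoeff
  have h11 := hcoeff 11
  have h10 := hcoeff 10
  have h6 := hcoeff 6
  norm_num [Nat.choose] at h11 h10 h6
  have hb : b = 0 := by simpa [he] using h10
  have hae11 : a ^ 11 * e = 1 := by rw [h11, mul_inv_cancel₀ (pow_ne_zero 11 ha)]
  have hae6 : (a * e) ^ 6 = 1 := by
    rw [hb] at h6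
    field_simp at h6
    linear_combination h6 / 11
  refine ⟨hb, hae11, mul_left_cancel₀ (mul_ne_zero (pow_ne_zero 6 ha) he) ?_⟩
  linear_combination hae11 - hae6

theorem formStabilizer_kleinForm_of_apply_one_zero_eq_zero {A : GL (Fin 2) K}
    (hA : A ∈ formStabilizer (kleinForm K)) (h10 : A.1 1 0 = 0) :
    A.1 0 1 = 0 ∧ A.1 0 0 ^ 11 * A.1 1 1 = 1 ∧ A.1 0 0 ^ 5 = A.1 1 1 ^ 5 := by
  have hdiag : A.1 0 0 * A.1 1 1 ≠ 0 := by
    have := A.det.ne_zero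
    rwa [GeneralLinearGroup.val_det_apply, det_fin_two, h10, mul_zero, sub_zero] at this
  obtain ⟨h00, h11⟩ := mul_ne_zero_iff.1 hdiag
  refine eq_zero_of_forall_eval_kleinForm_eq h00 h11 fun x y => ?_
  simpa [mulVec_fin_two, h10] using hA ![x, y]

end KleinForm

section CyclotomicInt

/-- The ring `ℤ[X] / (Φ_n)` of integers of the `n`-th cyclotomic field, in a form in which
homomorphisms out of it are given by roots of `Φ_n`. -/
abbrev CyclotomicInt (n : ℕ) : Type := AdjoinRoot (Polynomial.cyclotomic n ℤ)

namespace CyclotomicInt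

/-- The class of `X`, a primitive `n`-th root of unity. -/
def zeta (n : ℕ) : CyclotomicInt n := AdjoinRoot.root _

/-- The homomorphism from `CyclotomicInt n` to a field sending `zeta n` to a given primitive
`n`-th root of unity. -/
def evalAt {K : Type*} [Field K] {n : ℕ} [NeZero n] {ζ : K} (hζ : IsPrimitiveRoot ζ n) :
    CyclotomicInt n →+* K :=
  AdjoinRoot.lift (Int.castRingHom K) ζ <| by
    rw [← Polynomial.eval_map, Polynomial.map_cyclotomic_int]
    exact hζ.isRoot_cyclotomic (NeZero.pos n)

theorem evalAt_injective {K : Type*} [Field K] [CharZero K] {n : ℕ} [NeZero n] {ζ : K}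
    (hζ : IsPrimitiveRoot ζ n) : Function.Injective (evalAt hζ) := by
  refine (injective_iff_map_eq_zero _).2 fun x hx => ?_
  obtain ⟨q, rfl⟩ := AdjoinRoot.mk_surjective x
  rw [evalAt, AdjoinRoot.lift_mk] at hx
  rw [AdjoinRoot.mk_eq_zero, Polynomial.cyclotomic_eq_minpoly hζ (NeZero.pos n)]
  exact minpoly.isIntegrallyClosed_dvd (hζ.isIntegral (NeZero.pos n)) hx

/-- The residue map of `CyclotomicInt p` at the prime above `p`, sending `zeta p` to `1`. -/
def residue (p : ℕ) [Fact p.Prime] : CyclotomicInt p →+* ZMod p :=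
  AdjoinRoot.lift (Int.castRingHom (ZMod p)) 1 <| by
    rw [← Polynomial.eval_map, Polynomial.map_cyclotomic_int,
      Polynomial.eval_one_cyclotomic_prime, CharP.cast_eq_zero]

@[simp]
theorem evalAt_zeta {K : Type*} [Field K] {n : ℕ} [NeZero n] {ζ : K} (hζ : IsPrimitiveRoot ζ n) :
    evalAt hζ (zeta n) = ζ := AdjoinRoot.lift_root _

@[simp]
theorem residue_zeta (p : ℕ) [Fact p.Prime] : residue p (zeta p) = 1 :=
  AdjoinRoot.lift_root _

theorem sum_zeta_pow_eq_zero (p : ℕ) [Fact p.Prime] :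
    ∑ i ∈ Finset.range p, zeta p ^ i = 0 := by
  have h := AdjoinRoot.mk_self (f := Polynomial.cyclotomic p ℤ)
  conv_lhs at h => arg 2; rw [Polynomial.cyclotomic_prime]
  simpa [zeta] using h

end CyclotomicInt

theorem exists_pow_mul_eq_of_pow_eq_pow {K : Type*} [Field K] {n : ℕ} [NeZero n] {ζ : K}
    (hζ : IsPrimitiveRoot ζ n) {x y : K} (h : x ^ n = y ^ n) : ∃ k : Fin n, ζ ^ k.1 * y = x := by
  rcases eq_or_ne y 0 with rfl | hy
  · exact ⟨0, by simpa [eq_comm, NeZero.ne n] using h⟩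
  obtain ⟨k, hk, hζk⟩ := hζ.eq_pow_of_pow_eq_one
    (show (x / y) ^ n = 1 by rw [div_pow, h, div_self (pow_ne_zero n hy)])
  exact ⟨⟨k, hk⟩, by rw [hζk, div_mul_cancel₀ x hy]⟩

end CyclotomicInt

section IcosahedralMatrices

open CyclotomicInt
open scoped MatrixGroups

instance : Fact (Nat.Prime 5) := ⟨Nat.prime_five⟩

theorem sum_zeta_five_pow_eq_zero :
    1 + zeta 5 + zeta 5 ^ 2 + zeta 5 ^ 3 + zeta 5 ^ 4 = 0 := by
  simpa [Finset.sum_range_succ] using sum_zeta_pow_eq_zero 5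

/-- Integral form of the rotation `diag(ζ³, ζ²)` of order `5` about a vertex of the icosahedron. -/
def vertexRotation : SL(2, CyclotomicInt 5) :=
  ⟨!![zeta 5 ^ 3, -2 * zeta 5 ^ 2; 0, zeta 5 ^ 2], by
    rw [det_fin_two_of]
    linear_combination (zeta 5 - 1) * sum_zeta_five_pow_eq_zero⟩

/-- Integral form of `!![0, 1; -1, 0]`, which exchanges the two vertices fixed by
`vertexRotation`. -/
def axisFlip : SL(2, CyclotomicInt 5) :=
  ⟨!![2, 4 + 3 * zeta 5 + 2 * zeta 5 ^ 2 + zeta 5 ^ 3; zeta 5 - 1, -2], by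
    rw [det_fin_two_of]
    linear_combination -sum_zeta_five_pow_eq_zero⟩

/-- Integral form of the multiple of determinant `1` of `!![τ, 1; 1, -τ]`, where `τ = ζ + ζ⁴` is
the inverse golden ratio. -/
def goldenFlip : SL(2, CyclotomicInt 5) :=
  ⟨!![zeta 5 ^ 3 - zeta 5 ^ 2, -1 - 2 * zeta 5 ^ 2 - zeta 5 ^ 4;
      -zeta 5 ^ 3, zeta 5 ^ 2 - zeta 5 ^ 3], by
    have hz := sum_zeta_five_pow_eq_zero
    rw [det_fin_two_of]
    grind⟩

theorem axisFlip_sq : axisFlip ^ 2 = -1 := by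
  have hz := sum_zeta_five_pow_eq_zero
  have h : axisFlip.1 * axisFlip.1 = -1 := by
    ext i j
    rw [← sub_eq_zero, axisFlip]
    fin_cases i <;> fin_cases j <;> simp [Matrix.mul_apply, Fin.sum_univ_two] <;> grind
  exact Subtype.ext (by rw [pow_two]; exact h)

/-- Reduction of integral matrices of determinant `1` modulo the prime above `5`. -/
def residueSL : SL(2, CyclotomicInt 5) →* SL(2, ZMod 5) :=
  SpecialLinearGroup.map (residue 5)

theorem residueSL_vertexRotation : residueSL vertexRotation = ⟨!![1, -2; 0, 1], by decide⟩ := by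
  have h : vertexRotation.1.map (residue 5) = !![1, -2; 0, 1] := by
    ext i j
    fin_cases i <;> fin_cases j <;> simp [vertexRotation, map_ofNat (residue 5)]
  exact Subtype.ext h

theorem residueSL_axisFlip : residueSL axisFlip = ⟨!![2, 0; 0, -2], by decide⟩ := by
  have h01 : (4 + 3 + 2 + 1 : ZMod 5) = 0 := by decide
  have h : axisFlip.1.map (residue 5) = !![2, 0; 0, -2] := by
    ext i j
    fin_cases i <;> fin_cases j <;> simp [axisFlip, map_ofNat (residue 5), h01]
  exact Subtype.ext h

theorem residueSL_goldenFlip : residueSL goldenFlip = ⟨!![0, 1; -1, 0], by decide⟩ := by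
  have h01 : (-1 - 2 - 1 : ZMod 5) = 1 := by decide
  have h : goldenFlip.1.map (residue 5) = !![0, 1; -1, 0] := by
    ext i j
    fin_cases i <;> fin_cases j <;> simp [goldenFlip, map_ofNat (residue 5), h01]
  exact Subtype.ext h

/-- The elements of the Borel cell of the binary icosahedral group. -/
def borelWord (i : Fin 4) (s : Fin 5) : SL(2, CyclotomicInt 5) :=
  axisFlip ^ i.1 * vertexRotation ^ s.1

/-- The elements of the big Bruhat cell of the binary icosahedral group. -/
def bigCellWord (k : Fin 5) (i : Fin 4) (s : Fin 5) : SL(2, CyclotomicInt 5) :=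
  vertexRotation ^ k.1 * goldenFlip * borelWord i s

theorem eq_zero_of_residueSL_borelWord_eq_one (i : Fin 4) (s : Fin 5)
    (h : residueSL (borelWord i s) = 1) : i = 0 ∧ s = 0 := by
  simp only [borelWord, map_mul, map_pow, residueSL_axisFlip, residueSL_vertexRotation] at h
  revert i s
  decide +kernel

theorem residueSL_bigCellWord_ne_one (k : Fin 5) (i : Fin 4) (s : Fin 5) :
    residueSL (bigCellWord k i s) ≠ 1 := by
  simp only [bigCellWord, borelWord, map_mul, map_pow, residueSL_axisFlip,
    residueSL_vertexRotation, residueSL_goldenFlip]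
  revert k i s
  decide +kernel

theorem exists_residueSL_word_eq (n : SL(2, ZMod 5)) :
    (∃ i s, residueSL (borelWord i s) = n) ∨ ∃ k i s, residueSL (bigCellWord k i s) = n := by
  simp only [bigCellWord, borelWord, map_mul, map_pow, residueSL_axisFlip,
    residueSL_vertexRotation, residueSL_goldenFlip]
  revert n
  decide +kernel

end IcosahedralMatrices

section IcosahedralRepresentation

open CyclotomicInt
open scoped MatrixGroups

theorem inv_mul_apply_one_zero_eq_zero {K : Type*} [Field K] {A B : GL (Fin 2) K}
    (h : B.1 0 0 * A.1 1 0 = B.1 1 0 * A.1 0 0) : (B⁻¹ * A).1 1 0 = 0 := by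
  rw [Units.val_mul, coe_units_inv, inv_def, adjugate_fin_two, smul_mul, Matrix.smul_apply,
    Matrix.mul_apply, Fin.sum_univ_two]
  simp only [of_apply, cons_val]
  rw [neg_mul, neg_add_eq_sub, h, sub_self, smul_zero]

variable {K : Type*} [Field K] {ζ : K}

theorem sum_pow_primitiveRoot_five_eq_zero (hζ : IsPrimitiveRoot ζ 5) :
    1 + ζ + ζ ^ 2 + ζ ^ 3 + ζ ^ 4 = 0 := by
  simpa using congrArg (evalAt hζ) sum_zeta_five_pow_eq_zero

/-- Conjugation by this matrix turns the integral forms of the icosahedral matrices into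
matrices preserving Klein's form. -/
def integralBasis (hζ : IsPrimitiveRoot ζ 5) : GL (Fin 2) K :=
  GeneralLinearGroup.mkOfDetNeZero !![1 - ζ, 2; 0, 1] <| by
    rw [det_fin_two_of, mul_one, mul_zero, sub_zero]
    exact sub_ne_zero_of_ne (hζ.ne_one (by norm_num)).symm

/-- The two-dimensional representation of `SL(2, ℤ[ζ])` obtained from the standard one by the
change of basis `integralBasis`. -/
def conjRep (hζ : IsPrimitiveRoot ζ 5) : SL(2, CyclotomicInt 5) →* GL (Fin 2) K :=
  (MulAut.conj (integralBasis hζ)).toMonoidHom.comp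
    (SpecialLinearGroup.toGL.comp (SpecialLinearGroup.map (evalAt hζ)))

variable (hζ : IsPrimitiveRoot ζ 5)

theorem conjRep_injective [CharZero K] : Function.Injective (conjRep hζ) := by
  refine (MulAut.conj (integralBasis hζ)).injective.comp
    (SpecialLinearGroup.toGL_injective.comp fun A B h => ?_)
  exact Subtype.ext (map_injective (evalAt_injective hζ) (congrArg Subtype.val h))

theorem det_conjRep (A : SL(2, CyclotomicInt 5)) : (conjRep hζ A).1.det = 1 := by
  have h : (conjRep hζ A).det = 1 := by
    simp [conjRep, map_mul]
  exact congrArg Units.val h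

theorem conjRep_eq {A : SL(2, CyclotomicInt 5)} {M : Matrix (Fin 2) (Fin 2) K}
    (h : M * !![1 - ζ, 2; 0, 1] = !![1 - ζ, 2; 0, 1] * A.1.map (evalAt hζ)) :
    (conjRep hζ A).1 = M := by
  change !![1 - ζ, 2; 0, 1] * A.1.map (evalAt hζ) * (integralBasis hζ)⁻¹.1 = M
  rw [← h]
  exact Units.mul_inv_cancel_right M (integralBasis hζ)

theorem conjRep_vertexRotation_pow (k : ℕ) :
    (conjRep hζ (vertexRotation ^ k)).1 = !![ζ ^ (3 * k), 0; 0, ζ ^ (2 * k)] := by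
  have h : (conjRep hζ vertexRotation).1 = diagonal ![ζ ^ 3, ζ ^ 2] :=
    conjRep_eq hζ <| by
      ext i j
      fin_cases i <;> fin_cases j <;>
        simp [vertexRotation, Matrix.mul_apply, Fin.sum_univ_two, map_ofNat (evalAt hζ)] <;> ring
  rw [map_pow, Units.val_pow_eq_pow_val, h, diagonal_pow]
  ext i j
  fin_cases i <;> fin_cases j <;> simp [pow_mul]

theorem conjRep_axisFlip : (conjRep hζ axisFlip).1 = !![0, 1; -1, 0] :=
  conjRep_eq hζ <| by
    have h := sum_pow_primitiveRoot_five_eq_zero hζ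
    ext i j
    fin_cases i <;> fin_cases j <;>
      simp [axisFlip, Matrix.mul_apply, Fin.sum_univ_two, map_ofNat (evalAt hζ)] <;> grind

theorem conjRep_goldenFlip : (conjRep hζ goldenFlip).1 =
    (-ζ ^ 3 / (1 - ζ)) • !![ζ + ζ ^ 4, 1; 1, -(ζ + ζ ^ 4)] :=
  conjRep_eq hζ <| by
    have h := sum_pow_primitiveRoot_five_eq_zero hζ
    have h1 : 1 - ζ ≠ 0 := sub_ne_zero_of_ne (hζ.ne_one (by norm_num)).symm
    ext i j
    fin_cases i <;> fin_cases j <;>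
      simp [goldenFlip, Matrix.mul_apply, Fin.sum_univ_two, map_ofNat (evalAt hζ)] <;> grind

end IcosahedralRepresentation

section KleinFormStabilizer

open CyclotomicInt
open scoped MatrixGroups

variable {K : Type*} [Field K] {ζ : K} (hζ : IsPrimitiveRoot ζ 5)

theorem golden_of_isPrimitiveRoot_five (hζ : IsPrimitiveRoot ζ 5) :
    (ζ + ζ ^ 4) ^ 2 = 1 - (ζ + ζ ^ 4) := by
  linear_combination (1 + (2 + ζ ^ 3) * (ζ - 1)) * sum_pow_primitiveRoot_five_eq_zero hζ

/-- The binary icosahedral group: the integral matrices that preserve Klein's form in the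
representation `conjRep`. -/
def binaryIcosahedral : Subgroup (SL(2, CyclotomicInt 5)) :=
  (formStabilizer (kleinForm K)).comap (conjRep hζ)

theorem vertexRotation_mem : vertexRotation ∈ binaryIcosahedral hζ := fun v => by
  have h := conjRep_vertexRotation_pow hζ 1
  have h5 : ζ ^ 5 = 1 := hζ.pow_eq_one
  rw [pow_one] at h
  rw [h]
  simp only [eval_kleinForm, mulVec_fin_two, of_apply, cons_val]
  grind

theorem axisFlip_mem : axisFlip ∈ binaryIcosahedral hζ := fun v => by
  rw [conjRep_axisFlip, eval_kleinForm_rotate]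

theorem goldenFlip_mem : goldenFlip ∈ binaryIcosahedral hζ := fun v => by
  have h := sum_pow_primitiveRoot_five_eq_zero hζ
  have h1 : 1 - ζ ≠ 0 := sub_ne_zero_of_ne (hζ.ne_one (by norm_num)).symm
  have hsq : (-ζ ^ 3 / (1 - ζ)) ^ 2 * (1 + (ζ + ζ ^ 4) ^ 2) = -1 := by
    rw [div_pow, div_mul_eq_mul_div, div_eq_iff (pow_ne_zero 2 h1)]
    grind
  rw [conjRep_goldenFlip, smul_mulVec, eval_smul_of_isHomogeneous (isHomogeneous_kleinForm K),
    eval_kleinForm_golden (golden_of_isPrimitiveRoot_five hζ), ← mul_assoc,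
    show 12 = 2 * 6 from rfl, pow_mul, ← mul_pow, hsq, Even.neg_one_pow (by decide), one_mul]

/-- The elements of the binary icosahedral group that are used to move the vertex `[1 : 0]` of the
icosahedron to each of the twelve vertices. -/
inductive IsVertexTransport : SL(2, CyclotomicInt 5) → Prop
  | axisFlip_pow (i : Fin 2) : IsVertexTransport (axisFlip ^ i.1)
  | golden (k : Fin 5) (i : Fin 2) :
      IsVertexTransport (vertexRotation ^ k.1 * goldenFlip * axisFlip ^ i.1)

variable {hζ} in
theorem IsVertexTransport.mem {b : SL(2, CyclotomicInt 5)} (hb : IsVertexTransport b) :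
    b ∈ binaryIcosahedral hζ := by
  cases hb with
  | axisFlip_pow i => exact pow_mem (axisFlip_mem hζ) _
  | golden k i =>
    exact mul_mem (mul_mem (pow_mem (vertexRotation_mem hζ) _) (goldenFlip_mem hζ))
      (pow_mem (axisFlip_mem hζ) _)

theorem exists_isVertexTransport_of_eval_kleinForm_eq_zero {v : Fin 2 → K}
    (hv : eval v (kleinForm K) = 0) : ∃ b, IsVertexTransport b ∧
      (conjRep hζ b).1 0 0 * v 1 = (conjRep hζ b).1 1 0 * v 0 := by
  have hgolden := golden_of_isPrimitiveRoot_five hζ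
  rcases eq_pow_of_eval_kleinForm_eq_zero hgolden hv with h | h | h | h
  · exact ⟨_, .axisFlip_pow 1, by simp [conjRep_axisFlip, h]⟩
  · exact ⟨_, .axisFlip_pow 0, by simp [h]⟩
  · obtain ⟨k, hk⟩ := exists_pow_mul_eq_of_pow_eq_pow hζ h
    refine ⟨_, .golden k 0, ?_⟩
    suffices ζ ^ (3 * k.1) * (-ζ ^ 3 / (1 - ζ) * (ζ + ζ ^ 4)) * v 1 =
        ζ ^ (2 * k.1) * (-ζ ^ 3 / (1 - ζ)) * v 0 by
      simpa [conjRep_goldenFlip, conjRep_vertexRotation_pow, -map_pow]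
    rw [← hk]
    ring
  · obtain ⟨k, hk⟩ := exists_pow_mul_eq_of_pow_eq_pow hζ h
    refine ⟨_, .golden k 1, ?_⟩
    suffices ζ ^ (3 * k.1) * (-ζ ^ 3 / (1 - ζ)) * v 1 =
        ζ ^ (2 * k.1) * (-ζ ^ 3 / (1 - ζ) * -(ζ + ζ ^ 4)) * v 0 by
      simpa [conjRep_goldenFlip, conjRep_vertexRotation_pow, conjRep_axisFlip, -map_pow]
    linear_combination ζ ^ 3 / (1 - ζ) * ζ ^ (2 * k.1) * hk

variable [CharZero K]

theorem exists_eq_scalar_mul_vertexRotation_pow {A : GL (Fin 2) K}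
    (hA : A ∈ formStabilizer (kleinForm K)) (h10 : A.1 1 0 = 0) :
    ∃ σ : Kˣ, σ ^ 12 = 1 ∧ ∃ s : Fin 5,
      A = GeneralLinearGroup.scalar (Fin 2) σ * conjRep hζ (vertexRotation ^ s.1) := by
  obtain ⟨h01, h11, h5⟩ := formStabilizer_kleinForm_of_apply_one_zero_eq_zero hA h10
  obtain ⟨s, hs⟩ := exists_pow_mul_eq_of_pow_eq_pow hζ h5
  have hζ5 : (ζ ^ s.1) ^ 5 = 1 := by rw [← pow_mul, mul_comm, pow_mul, hζ.pow_eq_one, one_pow]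
  have hσ : (A.1 1 1 * ζ ^ (3 * s.1)) ^ 12 = 1 := by
    rw [← hs] at h11
    rw [pow_mul']
    grind
  refine ⟨Units.ofPowEqOne _ 12 hσ (by norm_num), Units.pow_ofPowEqOne hσ _, s, Units.ext ?_⟩
  rw [Units.val_mul, conjRep_vertexRotation_pow]
  ext i j
  fin_cases i <;> fin_cases j <;> simp [h10, h01, ← hs, pow_mul'] <;> grind

theorem exists_eq_scalar_mul_conjRep {A : GL (Fin 2) K} (hA : A ∈ formStabilizer (kleinForm K)) :
    ∃ σ : Kˣ, σ ^ 12 = 1 ∧ ∃ b, IsVertexTransport b ∧ ∃ s : Fin 5,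
      A = GeneralLinearGroup.scalar (Fin 2) σ * conjRep hζ (b * vertexRotation ^ s.1) := by
  have hroot : eval (A.1 *ᵥ ![1, 0]) (kleinForm K) = 0 := by
    rw [hA, eval_kleinForm]
    simp
  obtain ⟨b, hb, hbA⟩ := exists_isVertexTransport_of_eval_kleinForm_eq_zero hζ hroot
  have h10 : ((conjRep hζ b)⁻¹ * A).1 1 0 = 0 :=
    inv_mul_apply_one_zero_eq_zero <| by simpa [mulVec_fin_two] using hbA
  obtain ⟨σ, hσ, s, hs⟩ := exists_eq_scalar_mul_vertexRotation_pow hζ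
    (mul_mem (inv_mem (hb.mem (hζ := hζ))) hA) h10
  refine ⟨σ, hσ, b, hb, s, ?_⟩
  rw [inv_mul_eq_iff_eq_mul.1 hs, map_mul, ← mul_assoc, ← mul_assoc,
    GeneralLinearGroup.scalar_commute]

end KleinFormStabilizer

section ResidueEquiv

open CyclotomicInt
open scoped MatrixGroups

variable {K : Type*} [Field K] {ζ : K} (hζ : IsPrimitiveRoot ζ 5)

theorem borelWord_mem (i : Fin 4) (s : Fin 5) : borelWord i s ∈ binaryIcosahedral hζ :=
  mul_mem (pow_mem (axisFlip_mem hζ) _) (pow_mem (vertexRotation_mem hζ) _)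

theorem bigCellWord_mem (k : Fin 5) (i : Fin 4) (s : Fin 5) :
    bigCellWord k i s ∈ binaryIcosahedral hζ :=
  mul_mem (mul_mem (pow_mem (vertexRotation_mem hζ) _) (goldenFlip_mem hζ)) (borelWord_mem hζ i s)

theorem IsVertexTransport.exists_word_eq {b : SL(2, CyclotomicInt 5)}
    (hb : IsVertexTransport b) (j : Fin 2) (s : Fin 5) :
    (∃ i, axisFlip ^ (2 * j.1) * (b * vertexRotation ^ s.1) = borelWord i s) ∨
      ∃ k i, axisFlip ^ (2 * j.1) * (b * vertexRotation ^ s.1) = bigCellWord k i s := by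
  have hcentral (g : SL(2, CyclotomicInt 5)) : Commute (axisFlip ^ (2 * j.1)) g := by
    rw [pow_mul, axisFlip_sq]
    exact (Commute.neg_one_left g).pow_left _
  cases hb with
  | axisFlip_pow i =>
    refine .inl ⟨⟨2 * j.1 + i.1, by omega⟩, ?_⟩
    rw [borelWord, pow_add, mul_assoc]
  | golden k i =>
    refine .inr ⟨k, ⟨2 * j.1 + i.1, by omega⟩, ?_⟩
    rw [bigCellWord, borelWord, ← mul_assoc, ← mul_assoc, (hcentral _).eq, pow_add]
    simp only [mul_assoc]

variable [CharZero K]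

variable {hζ} in
theorem exists_word_eq_of_mem_binaryIcosahedral {g : SL(2, CyclotomicInt 5)}
    (hg : g ∈ binaryIcosahedral hζ) :
    (∃ i s, g = borelWord i s) ∨ ∃ k i s, g = bigCellWord k i s := by
  obtain ⟨σ, -, b, hb, s, hs⟩ := exists_eq_scalar_mul_conjRep hζ hg
  have hσ : (σ : K) ^ 2 = 1 := by
    have hdet := congrArg (fun A : GL (Fin 2) K => A.1.det) hs
    simpa [det_conjRep, -map_mul, -map_pow] using hdet.symm
  have hscalar : ∃ j : Fin 2, GeneralLinearGroup.scalar (Fin 2) σ =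
      conjRep hζ (axisFlip ^ (2 * j.1)) := by
    rcases sq_eq_one_iff.1 hσ with h | h
    · exact ⟨0, by rw [show σ = 1 from Units.ext h]; simp⟩
    · refine ⟨1, Units.ext ?_⟩
      rw [map_pow, Units.val_pow_eq_pow_val, conjRep_axisFlip, GeneralLinearGroup.coe_scalar, h]
      ext i j
      fin_cases i <;> fin_cases j <;> simp [pow_two]
  obtain ⟨j, hj⟩ := hscalar
  rw [hj, ← map_mul] at hs
  rw [conjRep_injective hζ hs]
  exact (hb.exists_word_eq j s).imp (fun ⟨i, hi⟩ => ⟨i, s, hi⟩) fun ⟨k, i, hi⟩ => ⟨k, i, s, hi⟩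

/-- Reduction modulo the prime above `5` identifies the binary icosahedral group with
`SL(2, 5)`. -/
def residueEquiv : binaryIcosahedral hζ ≃* SL(2, ZMod 5) :=
  MulEquiv.ofBijective (residueSL.comp (binaryIcosahedral hζ).subtype) <| by
    refine ⟨(injective_iff_map_eq_one _).2 ?_, fun n => ?_⟩
    · rintro ⟨g, hg⟩ h
      rcases exists_word_eq_of_mem_binaryIcosahedral hg with ⟨i, s, rfl⟩ | ⟨k, i, s, rfl⟩
      · obtain ⟨rfl, rfl⟩ := eq_zero_of_residueSL_borelWord_eq_one i s h
        exact Subtype.ext (one_mul 1)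
      · exact absurd h (residueSL_bigCellWord_ne_one k i s)
    · rcases exists_residueSL_word_eq n with ⟨i, s, rfl⟩ | ⟨k, i, s, rfl⟩
      · exact ⟨⟨_, borelWord_mem hζ i s⟩, rfl⟩
      · exact ⟨⟨_, bigCellWord_mem hζ k i s⟩, rfl⟩

/-- The faithful two-dimensional representation of `SL(2, 5)` whose image is the group of matrices
of determinant `1` preserving Klein's form. -/
def icosahedralRep : SL(2, ZMod 5) →* GL (Fin 2) K :=
  ((conjRep hζ).comp (binaryIcosahedral hζ).subtype).comp (residueEquiv hζ).symm.toMonoidHom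

theorem icosahedralRep_injective : Function.Injective (icosahedralRep hζ) :=
  ((conjRep_injective hζ).comp Subtype.val_injective).comp (residueEquiv hζ).symm.injective

theorem det_icosahedralRep (n : SL(2, ZMod 5)) : (icosahedralRep hζ n).1.det = 1 :=
  det_conjRep hζ _

theorem icosahedralRep_mem (n : SL(2, ZMod 5)) :
    icosahedralRep hζ n ∈ formStabilizer (kleinForm K) := ((residueEquiv hζ).symm n).2

theorem icosahedralRep_residueSL {g : SL(2, CyclotomicInt 5)}
    (hg : g ∈ binaryIcosahedral hζ) : icosahedralRep hζ (residueSL g) = conjRep hζ g := by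
  have h : residueEquiv hζ ⟨g, hg⟩ = residueSL g := rfl
  rw [← h, icosahedralRep]
  simp only [MonoidHom.comp_apply, MulEquiv.toMonoidHom_eq_coe, MonoidHom.coe_coe,
    MulEquiv.symm_apply_apply, Subgroup.subtype_apply]

theorem exists_eq_scalar_mul_icosahedralRep {A : GL (Fin 2) K}
    (hA : A ∈ formStabilizer (kleinForm K)) : ∃ σ : Kˣ, σ ^ 12 = 1 ∧ ∃ n,
      A = GeneralLinearGroup.scalar (Fin 2) σ * icosahedralRep hζ n := by
  obtain ⟨σ, hσ, b, hb, s, hs⟩ := exists_eq_scalar_mul_conjRep hζ hA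
  refine ⟨σ, hσ, residueSL (b * vertexRotation ^ s.1), ?_⟩
  rw [hs, icosahedralRep_residueSL hζ (mul_mem hb.mem (pow_mem (vertexRotation_mem hζ) _))]

end ResidueEquiv

section SemidirectProduct

open CyclotomicInt
open scoped MatrixGroups

/-- The homomorphism from the cyclic group of order `n` determined by an element `x` with
`x ^ n = 1`. -/
def zmodPowersHom {G : Type*} [Group G] (n : ℕ) [NeZero n] (x : G) (hx : x ^ n = 1) :
    Multiplicative (ZMod n) →* G where
  toFun a := x ^ a.toAdd.val
  map_one' := by simp
  map_mul' a b := by rw [toAdd_mul, ZMod.val_add, ← pow_eq_pow_mod _ hx, pow_add]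

theorem zmodPowersHom_apply {G : Type*} [Group G] (n : ℕ) [NeZero n] (x : G) (hx : x ^ n = 1)
    (a : Multiplicative (ZMod n)) : zmodPowersHom n x hx a = x ^ a.toAdd.val := rfl

theorem conj_scalar_mul {K n : Type*} [CommRing K] [Fintype n] [DecidableEq n] (c : Kˣ)
    (A : GL n K) : MulAut.conj (GeneralLinearGroup.scalar n c * A) = MulAut.conj A := by
  ext1 B
  rw [MulAut.conj_apply, MulAut.conj_apply, GeneralLinearGroup.scalar_commute, _root_.mul_inv_rev,
    mul_assoc A, GeneralLinearGroup.scalar_commute]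
  group

theorem sq_eq_neg_one_of_isPrimitiveRoot_four {R : Type*} [CommRing R] [IsDomain R] {ι : Rˣ}
    (hι : IsPrimitiveRoot (ι : R) 4) : ι ^ 2 = -1 :=
  Units.ext <| (hι.pow (by norm_num) (by norm_num : 4 = 2 * 2)).eq_neg_one_of_two_right

theorem eq_zero_of_pow_mul_neg_one_pow_eq_one {R : Type*} [CommRing R] [CharZero R] {ω : R}
    (hω : IsPrimitiveRoot ω 3) {a b : ℕ} (ha : a < 3) (hb : b < 2)
    (h : ω ^ (2 * a) * (-1) ^ b = 1) : a = 0 ∧ b = 0 := by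
  have hb0 : b = 0 := by
    have hcube : (-1 : R) ^ b = 1 := by
      have hωa : (ω ^ (2 * a)) ^ 3 = 1 := by rw [pow_right_comm, hω.pow_eq_one, one_pow]
      have h3 := congrArg (· ^ 3) h
      simpa only [mul_pow, hωa, one_mul, one_pow, pow_right_comm _ b 3,
        Odd.neg_one_pow (by decide : Odd 3)] using h3
    interval_cases b
    · rfl
    · norm_num at hcube
  subst hb0
  have hdvd : 3 ∣ 2 * a := (hω.pow_eq_one_iff_dvd _).1 (by simpa using h)
  omega

/-- The action of `ℤ/2` on `SL(2, 5)` through conjugation by the image of `axisFlip`, whose square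
is `-1`. -/
def flipAction : Multiplicative (ZMod 2) →* MulAut (SL(2, ZMod 5)) :=
  zmodPowersHom 2 (MulAut.conj (residueSL axisFlip)) <| by
    have hsq : residueSL axisFlip ^ 2 = -1 := by
      rw [residueSL_axisFlip]
      decide
    rw [← map_pow, hsq]
    ext1 n
    simp

variable {K : Type*} [Field K] [CharZero K] {ζ : K} (hζ : IsPrimitiveRoot ζ 5)
  {ι : Kˣ}

/-- The scalar multiple of `axisFlip` of order `2`. -/
def reflection (ι : Kˣ) : GL (Fin 2) K := GeneralLinearGroup.scalar (Fin 2) ι *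
  icosahedralRep hζ (residueSL axisFlip)

theorem reflection_sq (hι : IsPrimitiveRoot (ι : K) 4) : reflection hζ ι ^ 2 = 1 := by
  rw [reflection, icosahedralRep_residueSL hζ (axisFlip_mem hζ),
    Commute.mul_pow (GeneralLinearGroup.scalar_commute _ _), ← map_pow,
    sq_eq_neg_one_of_isPrimitiveRoot_four hι]
  ext i j
  rw [Units.val_mul, Units.val_pow_eq_pow_val, conjRep_axisFlip, GeneralLinearGroup.coe_scalar]
  fin_cases i <;> fin_cases j <;> simp [pow_two]

theorem det_reflection (hι : IsPrimitiveRoot (ι : K) 4) : (reflection hζ ι).1.det = -1 := by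
  have h : (ι : K) ^ 2 = -1 := congrArg Units.val (sq_eq_neg_one_of_isPrimitiveRoot_four hι)
  rw [reflection, Units.val_mul, det_mul, det_icosahedralRep, GeneralLinearGroup.coe_scalar,
    mul_one, scalar_apply, det_diagonal]
  simpa [pow_two] using h

theorem icosahedralRep_flipAction (b : Multiplicative (ZMod 2)) :
    (icosahedralRep hζ).comp (flipAction b).toMonoidHom =
      (MulAut.conj (reflection hζ ι ^ b.toAdd.val)).toMonoidHom.comp (icosahedralRep hζ) := by
  ext1 n
  rw [reflection, Commute.mul_pow (GeneralLinearGroup.scalar_commute _ _), ← map_pow,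
    conj_scalar_mul, ← map_pow, flipAction, zmodPowersHom_apply, ← map_pow]
  simp [-map_pow]

variable {ω : Kˣ} (hι : IsPrimitiveRoot (ι : K) 4) (hω : IsPrimitiveRoot (ω : K) 3)

/-- The extension of `icosahedralRep` to the semidirect product, the generator of `ℤ/2` acting by
`reflection`. -/
def semidirectRep : SL(2, ZMod 5) ⋊[flipAction] Multiplicative (ZMod 2) →* GL (Fin 2) K :=
  SemidirectProduct.lift (icosahedralRep hζ)
    (zmodPowersHom 2 (reflection hζ ι) (reflection_sq hζ hι)) (icosahedralRep_flipAction hζ)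

/-- The representation of `ℤ/3 × (SL(2, 5) ⋊ ℤ/2)` in which `ℤ/3` acts by cube roots of unity. -/
def kleinRep : Multiplicative (ZMod 3) ×
    (SL(2, ZMod 5) ⋊[flipAction] Multiplicative (ZMod 2)) →* GL (Fin 2) K :=
  MonoidHom.noncommCoprod
    (zmodPowersHom 3 (GeneralLinearGroup.scalar (Fin 2) ω) <| by
      rw [← map_pow, show ω ^ 3 = 1 from Units.ext hω.pow_eq_one, map_one])
    (semidirectRep hζ hι) fun a b => by
      rw [zmodPowersHom_apply, ← map_pow]
      exact GeneralLinearGroup.scalar_commute _ _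

theorem kleinRep_apply (a : Multiplicative (ZMod 3)) (n : SL(2, ZMod 5))
    (b : Multiplicative (ZMod 2)) : kleinRep hζ hι hω (a, ⟨n, b⟩) =
      GeneralLinearGroup.scalar (Fin 2) ω ^ a.toAdd.val *
        (icosahedralRep hζ n * reflection hζ ι ^ b.toAdd.val) := rfl

theorem det_kleinRep (a : Multiplicative (ZMod 3)) (n : SL(2, ZMod 5))
    (b : Multiplicative (ZMod 2)) : (kleinRep hζ hι hω (a, ⟨n, b⟩)).1.det =
      (ω : K) ^ (2 * a.toAdd.val) * (-1) ^ b.toAdd.val := by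
  have hscalar : (GeneralLinearGroup.scalar (Fin 2) ω).1.det = (ω : K) ^ 2 := by
    simp [pow_two]
  rw [kleinRep_apply, Units.val_mul, Units.val_mul, Units.val_pow_eq_pow_val,
    Units.val_pow_eq_pow_val, det_mul, det_mul, det_pow, det_pow, hscalar, det_icosahedralRep,
    det_reflection hζ hι, one_mul, pow_mul]

theorem kleinRep_injective : Function.Injective (kleinRep hζ hι hω) := by
  refine (injective_iff_map_eq_one _).2 ?_
  rintro ⟨a, n, b⟩ h
  have hdet := det_kleinRep hζ hι hω a n b
  rw [h, Units.val_one, det_one] at hdet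
  obtain ⟨ha, hb⟩ := eq_zero_of_pow_mul_neg_one_pow_eq_one hω (ZMod.val_lt _) (ZMod.val_lt _)
    hdet.symm
  rw [kleinRep_apply, ha, hb, pow_zero, pow_zero, one_mul, mul_one] at h
  obtain rfl := (injective_iff_map_eq_one _).1 (icosahedralRep_injective hζ) n h
  obtain rfl : a = 1 := (ZMod.val_eq_zero _).1 ha
  obtain rfl : b = 1 := (ZMod.val_eq_zero _).1 hb
  rfl

theorem icosahedralRep_mem_range (n : SL(2, ZMod 5)) :
    icosahedralRep hζ n ∈ (kleinRep hζ hι hω).range :=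
  ⟨(1, ⟨n, 1⟩), (kleinRep_apply ..).trans (by simp)⟩

theorem scalar_mem_range {σ : Kˣ} (hσ : σ ^ 12 = 1) :
    GeneralLinearGroup.scalar (Fin 2) σ ∈ (kleinRep hζ hι hω).range := by
  have hω_mem : GeneralLinearGroup.scalar (Fin 2) ω ∈ (kleinRep hζ hι hω).range :=
    ⟨(.ofAdd 1, ⟨1, 1⟩), (kleinRep_apply ..).trans (by simp [ZMod.val_one])⟩
  have hrefl_mem : reflection hζ ι ∈ (kleinRep hζ hι hω).range :=
    ⟨(1, ⟨1, .ofAdd 1⟩), (kleinRep_apply ..).trans (by simp [ZMod.val_one])⟩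
  have hι_mem : GeneralLinearGroup.scalar (Fin 2) ι ∈ (kleinRep hζ hι hω).range := by
    rw [← mul_inv_cancel_right (GeneralLinearGroup.scalar (Fin 2) ι)
      (icosahedralRep hζ (residueSL axisFlip))]
    exact mul_mem hrefl_mem (inv_mem (icosahedralRep_mem_range hζ hι hω _))
  obtain ⟨k, -, hk⟩ := hι.eq_pow_of_pow_eq_one (ξ := ((σ ^ 9 : Kˣ) : K)) <| by
    rw [← Units.val_pow_eq_pow_val, ← pow_mul, pow_mul σ 12 3, hσ, one_pow, Units.val_one]
  obtain ⟨l, -, hl⟩ := hω.eq_pow_of_pow_eq_one (ξ := ((σ ^ 4 : Kˣ) : K)) <| by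
    rw [← Units.val_pow_eq_pow_val, ← pow_mul, hσ, Units.val_one]
  have hσ_eq : σ = ι ^ k * ω ^ l := Units.ext <| by
    rw [Units.val_mul, Units.val_pow_eq_pow_val, Units.val_pow_eq_pow_val, hk, hl,
      ← Units.val_mul, ← pow_add, pow_succ, hσ, one_mul]
  rw [hσ_eq, map_mul, map_pow, map_pow]
  exact mul_mem (pow_mem hι_mem k) (pow_mem hω_mem l)

theorem range_kleinRep : (kleinRep hζ hι hω).range = formStabilizer (kleinForm K) := by
  refine le_antisymm ?_ fun A hA => ?_
  · have hscalar (c : Kˣ) (hc : c ^ 12 = 1) :=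
      scalar_mem_formStabilizer (isHomogeneous_kleinForm K) hc
    rintro - ⟨⟨a, n, b⟩, rfl⟩
    rw [kleinRep_apply]
    refine mul_mem (pow_mem (hscalar ω ?_) _)
      (mul_mem (icosahedralRep_mem hζ n) (pow_mem (mul_mem (hscalar ι ?_) ?_) _))
    · exact Units.ext (by simpa using (hω.pow_eq_one_iff_dvd 12).2 (by norm_num))
    · exact Units.ext (by simpa using (hι.pow_eq_one_iff_dvd 12).2 (by norm_num))
    · exact icosahedralRep_mem hζ _
  · obtain ⟨σ, hσ, n, rfl⟩ := exists_eq_scalar_mul_icosahedralRep hζ hA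
    exact mul_mem (scalar_mem_range hζ hι hω hσ) (icosahedralRep_mem_range hζ hι hω n)

theorem nonempty_mulEquiv_formStabilizer_kleinForm (hζ : IsPrimitiveRoot ζ 5)
    (hι : IsPrimitiveRoot (ι : K) 4) (hω : IsPrimitiveRoot (ω : K) 3) :
    Nonempty (formStabilizer (kleinForm K) ≃* Multiplicative (ZMod 3) ×
      (SL(2, ZMod 5) ⋊[flipAction] Multiplicative (ZMod 2))) :=
  ⟨((MonoidHom.ofInjective (kleinRep_injective hζ hι hω)).trans
    (MulEquiv.subgroupCongr (range_kleinRep hζ hι hω))).symm⟩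

theorem card_prod_semidirectProduct : Nat.card (Multiplicative (ZMod 3) ×
    (SL(2, ZMod 5) ⋊[flipAction] Multiplicative (ZMod 2))) = 720 := by
  have hSL : Nat.card (SL(2, ZMod 5)) = 120 := by
    rw [Nat.card_eq_fintype_card]
    decide +kernel
  rw [Nat.card_prod, SemidirectProduct.card, hSL]
  simp

end SemidirectProduct

theorem stmt8 :
    Nat.card (Lin G12) = 720 ∧
    ∃ φ : Multiplicative (ZMod 2) →* MulAut (Matrix.SpecialLinearGroup (Fin 2) (ZMod 5)),
      Nonempty (Lin G12 ≃*
        Multiplicative (ZMod 3) ×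
          (Matrix.SpecialLinearGroup (Fin 2) (ZMod 5) ⋊[φ] Multiplicative (ZMod 2))) := by
  have hζ := Complex.isPrimitiveRoot_exp 5 (by norm_num)
  have hι := Complex.isPrimitiveRoot_exp 4 (by norm_num)
  have hω := Complex.isPrimitiveRoot_exp 3 (by norm_num)
  obtain ⟨ι, hι_eq⟩ := hι.isUnit (by norm_num)
  obtain ⟨ω, hω_eq⟩ := hω.isUnit (by norm_num)
  obtain ⟨e⟩ := nonempty_mulEquiv_formStabilizer_kleinForm hζ (hι_eq ▸ hι) (hω_eq ▸ hω)
  have linEquiv : formStabilizer (kleinForm ℂ) ≃* Lin G12 := cyclicForm_kleinForm ▸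
    formStabilizerEquivLin (by norm_num) isTotallyCoupled_kleinForm (isHomogeneous_kleinForm ℂ)
  refine ⟨?_, flipAction, ⟨linEquiv.symm.trans e⟩⟩
  rw [Nat.card_congr (linEquiv.symm.trans e).toEquiv, card_prod_semidirectProduct]
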